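/- Let X be a Banach space and G : X → X a linear operator. Assume there exist constants λ₁ ∈ [0,1) and λ₂ ∈ [0,1) such that ‖Gx − x‖ ≤ λ₁‖x‖ + λ₂‖Gx‖ for all x ∈ X. Then G is bounded, bijective with bounded linear inverse G⁻¹ : X → X, and ((1−λ₂)/(1+λ₁))‖x‖ ≤ ‖G⁻¹x‖ ≤ ((1+λ₂)/(1−λ₁))‖x‖ for all x ∈ X. -/

import Mathlib

/-!
The segment `T t = 1 + t • (G - 1)`, `t ∈ [0, 1]`, joins the identity to `G`. The hypothesis makes
`G` bounded and gives a lower bound `‖x‖ ≤ K ‖T t x‖` with `K` independent of `t`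
(`norm_le_of_segment`). Hence, whenever `T t` is invertible, its inverse has norm at most `K`, so by
the Neumann series `T s` is invertible as soon as `|s - t| ‖G - 1‖ K < 1`. Finitely many steps of
such a length lead from `T 0 = 1` to `T 1 = G` (`isUnit_one_add_of_segment_bound`). The two-sided
estimate for `G⁻¹` is the triangle inequality applied to the hypothesis.
-/

open Filter Topology

noncomputable section

/-- The lower bound along the segment from the identity to `G`, where `y = G x`, `d = G x - x`, and
`z = x + t d` is the value at `x` of the operator at parameter `t`. Writing `x = z - t d` and
`y = z + (1 - t) d`, the hypothesis bounds `‖d‖` by `(l1 + l2) ‖z‖ + max l1 l2 * ‖d‖`, and the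
last term is absorbed on the left. -/
lemma norm_le_of_segment {𝕜 X : Type*} [RCLike 𝕜] [NormedAddCommGroup X] [NormedSpace 𝕜 X]
    {l1 l2 t : ℝ} (hl1 : 0 ≤ l1) (hl1' : l1 < 1) (hl2 : 0 ≤ l2) (hl2' : l2 < 1)
    (ht : 0 ≤ t) (ht' : t ≤ 1) (x y : X) (h : ‖y - x‖ ≤ l1 * ‖x‖ + l2 * ‖y‖) :
    ‖x‖ ≤ (1 + (l1 + l2) / (1 - max l1 l2)) * ‖x + (t : 𝕜) • (y - x)‖ := by
  set d := y - x with hd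
  set z := x + (t : 𝕜) • d with hz
  have hx : ‖x‖ ≤ ‖z‖ + t * ‖d‖ := by
    have e : x = z - (t : 𝕜) • d := by rw [hz]; abel
    calc ‖x‖ = ‖z - (t : 𝕜) • d‖ := by rw [← e]
      _ ≤ ‖z‖ + ‖(t : 𝕜) • d‖ := norm_sub_le _ _
      _ = _ := by rw [norm_smul, RCLike.norm_ofReal, abs_of_nonneg ht]
  have hy : ‖y‖ ≤ ‖z‖ + (1 - t) * ‖d‖ := by
    have e : y = z + ((1 - t : ℝ) : 𝕜) • d := by
      rw [hz, hd]; push_cast; module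
    calc ‖y‖ = ‖z + ((1 - t : ℝ) : 𝕜) • d‖ := by rw [← e]
      _ ≤ ‖z‖ + ‖((1 - t : ℝ) : 𝕜) • d‖ := norm_add_le _ _
      _ = _ := by rw [norm_smul, RCLike.norm_ofReal, abs_of_nonneg (by linarith)]
  have hm : 0 < 1 - max l1 l2 := sub_pos.2 (max_lt hl1' hl2')
  have hdz : ‖d‖ ≤ (l1 + l2) / (1 - max l1 l2) * ‖z‖ := by
    rw [div_mul_eq_mul_div, le_div_iff₀ hm]
    have a1 := mul_le_mul_of_nonneg_left hx hl1
    have a2 := mul_le_mul_of_nonneg_left hy hl2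
    have a3 : l1 * (t * ‖d‖) ≤ max l1 l2 * (t * ‖d‖) := by gcongr; exact le_max_left _ _
    have a4 : l2 * ((1 - t) * ‖d‖) ≤ max l1 l2 * ((1 - t) * ‖d‖) :=
      mul_le_mul_of_nonneg_right (le_max_right _ _)
        (mul_nonneg (by linarith) (norm_nonneg _))
    linarith
  have : t * ‖d‖ ≤ ‖d‖ := mul_le_of_le_one_left (norm_nonneg _) ht'
  linarith

/-- Method of continuity for the segment from `1` to `1 + D`: a lower bound that is uniform along
the segment forces the endpoint to be invertible. -/
lemma isUnit_one_add_of_segment_bound {𝕜 X : Type*} [RCLike 𝕜] [NormedAddCommGroup X]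
    [NormedSpace 𝕜 X] [CompleteSpace X] (D : X →L[𝕜] X) {K : ℝ} (hK : 0 ≤ K)
    (hb : ∀ t : ℝ, 0 ≤ t → t ≤ 1 → ∀ x : X, ‖x‖ ≤ K * ‖x + (t : 𝕜) • D x‖) :
    IsUnit (1 + D) := by
  obtain ⟨n, hn⟩ := exists_nat_gt (K * ‖D‖)
  have hn0 : (0 : ℝ) < n := lt_of_le_of_lt (by positivity) hn
  have key : ∀ k : ℕ, k ≤ n → IsUnit (1 + ((k / n : ℝ) : 𝕜) • D) := by
    intro k
    induction k with
    | zero => intro _; simp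
    | succ k ih =>
      intro hk
      obtain ⟨u, hu⟩ := ih (by omega)
      have hkn : (k / n : ℝ) ≤ 1 := by
        rw [div_le_one hn0]; exact_mod_cast (by omega : k ≤ n)
      have hinv : ‖(↑u⁻¹ : X →L[𝕜] X)‖ ≤ K := by
        refine ContinuousLinearMap.opNorm_le_bound _ hK fun x => ?_
        have := hb (k / n) (by positivity) hkn ((↑u⁻¹ : X →L[𝕜] X) x)
        have e : (u : X →L[𝕜] X) ((↑u⁻¹ : X →L[𝕜] X) x) = x := by
          rw [← mul_apply_eq_comp, Units.mul_inv]; rfl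
        rw [hu] at e
        change (↑u⁻¹ : X →L[𝕜] X) x + ((k / n : ℝ) : 𝕜) • D ((↑u⁻¹ : X →L[𝕜] X) x) = x at e
        rwa [e] at this
      have hstep : 1 + (((k + 1 : ℕ) / n : ℝ) : 𝕜) • D
          = u * (1 - ↑u⁻¹ * (-(((1 / n : ℝ) : 𝕜) • D))) := by
        rw [mul_sub, mul_one, ← mul_assoc, Units.mul_inv, one_mul, hu]
        push_cast
        module
      rw [hstep]
      refine u.isUnit.mul (isUnit_one_sub_of_norm_lt_one ?_)
      calc _ ≤ ‖(↑u⁻¹ : X →L[𝕜] X)‖ * ‖-(((1 / n : ℝ) : 𝕜) • D)‖ := norm_mul_le _ _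
        _ ≤ K * (1 / n * ‖D‖) := by
          rw [norm_neg, norm_smul, RCLike.norm_ofReal, abs_of_nonneg (by positivity)]
          gcongr
        _ = K * ‖D‖ / n := by ring
        _ < 1 := (div_lt_one hn0).2 hn
  simpa [div_self hn0.ne'] using key n le_rfl

/-- (Casazza–Christensen) If `G : X → X` is a linear operator on a Banach space `X`
and there are `λ₁, λ₂ ∈ [0,1)` with `‖Gx - x‖ ≤ λ₁ ‖x‖ + λ₂ ‖Gx‖` for all `x`, then
`G` is bounded and bijective with bounded linear inverse `G⁻¹`, and
`((1-λ₂)/(1+λ₁)) ‖x‖ ≤ ‖G⁻¹ x‖ ≤ ((1+λ₂)/(1-λ₁)) ‖x‖` for all `x`. -/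
theorem statement1 {𝕜 : Type} [RCLike 𝕜] {X : Type} [NormedAddCommGroup X]
    [NormedSpace 𝕜 X] [CompleteSpace X]
    (G : X →ₗ[𝕜] X) (l1 l2 : ℝ)
    (hl1 : 0 ≤ l1) (hl1' : l1 < 1) (hl2 : 0 ≤ l2) (hl2' : l2 < 1)
    (h : ∀ x : X, ‖G x - x‖ ≤ l1 * ‖x‖ + l2 * ‖G x‖) :
    Continuous G ∧ Function.Bijective G ∧
    ∃ Ginv : X →L[𝕜] X, (∀ x, Ginv (G x) = x) ∧ (∀ x, G (Ginv x) = x) ∧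
      ∀ x : X, (1 - l2) / (1 + l1) * ‖x‖ ≤ ‖Ginv x‖ ∧
        ‖Ginv x‖ ≤ (1 + l2) / (1 - l1) * ‖x‖ := by
  have hG : ∀ x, ‖G x‖ ≤ (1 + l1) / (1 - l2) * ‖x‖ := fun x => by
    rw [div_mul_eq_mul_div, le_div_iff₀ (by linarith)]
    have h1 := h x
    have h2 := norm_sub_norm_le (G x) x
    linarith
  have hx : ∀ x, ‖x‖ ≤ (1 + l2) / (1 - l1) * ‖G x‖ := fun x => by
    rw [div_mul_eq_mul_div, le_div_iff₀ (by linarith)]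
    have h1 := h x
    have h2 := norm_sub_norm_le x (G x)
    rw [norm_sub_rev] at h2
    linarith
  set A : X →L[𝕜] X := G.mkContinuous _ hG with hA
  have hAG : ∀ x, A x = G x := fun _ => rfl
  have hm : 0 < 1 - max l1 l2 := sub_pos.2 (max_lt hl1' hl2')
  have hunit : IsUnit (1 + (A - 1)) :=
    isUnit_one_add_of_segment_bound (A - 1)
      (K := 1 + (l1 + l2) / (1 - max l1 l2)) (by positivity)
      fun t ht ht' x => norm_le_of_segment hl1 hl1' hl2 hl2' ht ht' x (G x) (h x)
  rw [add_sub_cancel] at hunit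
  obtain ⟨u, hu⟩ := hunit
  have hl : ∀ x, (↑u⁻¹ : X →L[𝕜] X) (G x) = x := fun x => by
    rw [← hAG, ← hu, ← mul_apply_eq_comp, Units.inv_mul]; rfl
  have hr : ∀ x, G ((↑u⁻¹ : X →L[𝕜] X) x) = x := fun x => by
    rw [← hAG, ← hu, ← mul_apply_eq_comp, Units.mul_inv]; rfl
  refine ⟨A.continuous, ⟨Function.LeftInverse.injective hl, Function.RightInverse.surjective hr⟩,
    ↑u⁻¹, hl, hr, fun x => ⟨?_, ?_⟩⟩
  · have h1 := hG ((↑u⁻¹ : X →L[𝕜] X) x)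
    rw [hr, div_mul_eq_mul_div, le_div_iff₀ (by linarith)] at h1
    rw [div_mul_eq_mul_div, div_le_iff₀ (by linarith)]
    linarith
  · have h1 := hx ((↑u⁻¹ : X →L[𝕜] X) x)
    rwa [hr] at h1
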